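/- arXiv:1710.11609 — 5 statements merged into one kernel-verified Lean document; each statement's English description precedes it below -/
import Mathlib

section
/- Let L : ℂ[x] → ℂ[x] be the linear operator L(p) = p' + 5x⁴·p. Then ℂ[x] decomposes as the direct sum of the range of L and the linear span of {1, x, x², x³}; that is, every polynomial is congruent modulo the image of L to a unique linear combination of 1, x, x², x³, and the quotient ℂ[x]/L(ℂ[x]) is 4-dimensional. -/
/-!
The operator `L` raises degrees by exactly four, multiplying the leading coefficient by `5`:
in degree `natDegree p + 4` the term `p'` contributes nothing. Hence no nonzero element of the
range has degree less than four, which gives disjointness from the span of `1, x, x², x³`.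
Conversely, `x^(n+4) = (L(x^n) - n x^(n-1)) / 5`, so strong induction on the exponent reduces
every monomial modulo the range to degree less than four. The dimension of the quotient is then
that of the complement, the space of polynomials of degree less than four.
-/

open Polynomial

/-- The one-variable twisted differential `L(p) = p' + 5x⁴·p` associated to the
potential `x⁵`. -/
noncomputable def Ltw : Polynomial ℂ →ₗ[ℂ] Polynomial ℂ :=
  Polynomial.derivative + LinearMap.mulLeft ℂ (5 * X ^ 4)

theorem Ltw_apply (p : ℂ[X]) : Ltw p = derivative p + 5 * X ^ 4 * p := by
  simp [Ltw, mul_assoc]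

theorem span_eq_degreeLT :
    Submodule.span ℂ ({1, X, X ^ 2, X ^ 3} : Set ℂ[X]) = degreeLT ℂ 4 := by
  classical
  rw [degreeLT_eq_span_X_pow]
  congr 1
  ext p
  simp [Finset.range_add_one]
  tauto

theorem coeff_Ltw_natDegree_add_four (p : ℂ[X]) :
    (Ltw p).coeff (p.natDegree + 4) = 5 * p.leadingCoeff := by
  have h : (5 * X ^ 4 * p : ℂ[X]) = C 5 * (p * X ^ 4) := by
    rw [show (C 5 : ℂ[X]) = 5 from rfl]
    ring
  rw [Ltw_apply, h, coeff_add, coeff_derivative, coeff_C_mul, coeff_mul_X_pow,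
    coeff_eq_zero_of_natDegree_lt (by lia)]
  simp

theorem X_pow_mem_sup (n : ℕ) :
    (X ^ n : ℂ[X]) ∈ LinearMap.range Ltw ⊔ degreeLT ℂ 4 := by
  induction n using Nat.strong_induction_on with
  | _ n ih =>
    by_cases hn : n < 4
    · refine Submodule.mem_sup_right (mem_degreeLT.2 ?_)
      rw [degree_X_pow]
      exact_mod_cast hn
    · obtain ⟨m, rfl⟩ := Nat.exists_eq_add_of_le' (not_lt.1 hn)
      have key : (X ^ (m + 4) : ℂ[X]) =
          (5⁻¹ : ℂ) • (Ltw (X ^ m) - (m : ℂ) • X ^ (m - 1)) := by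
        rw [eq_inv_smul_iff₀ (by norm_num), Ltw_apply, derivative_X_pow]
        simp only [smul_eq_C_mul]
        rw [show (C 5 : ℂ[X]) = 5 from rfl]
        ring
      rw [key]
      -- For `m = 0` the truncated exponent `m - 1` is `0`, still below `m + 4`.
      exact Submodule.smul_mem _ _ (Submodule.sub_mem _
        (Submodule.mem_sup_left ⟨_, rfl⟩)
        (Submodule.smul_mem _ _ (ih (m - 1) (by lia))))

theorem isCompl_range_Ltw_degreeLT : IsCompl (LinearMap.range Ltw) (degreeLT ℂ 4) := by
  constructor
  · rw [Submodule.disjoint_def]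
    rintro _ ⟨p, rfl⟩ hp
    have h0 : (Ltw p).coeff (p.natDegree + 4) = 0 := by
      refine coeff_eq_zero_of_degree_lt ((mem_degreeLT.1 hp).trans_le ?_)
      exact_mod_cast Nat.le_add_left 4 p.natDegree
    rw [coeff_Ltw_natDegree_add_four] at h0
    have : p = 0 := by simpa using h0
    simp [this]
  · rw [codisjoint_iff, eq_top_iff]
    intro p _
    rw [p.as_sum_range_C_mul_X_pow]
    refine Submodule.sum_mem _ fun i _ => ?_
    rw [← smul_eq_C_mul]
    exact Submodule.smul_mem _ _ (X_pow_mem_sup i)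

/-- `ℂ[x]` decomposes as the direct sum of the range of `L` and the span of
`{1, x, x², x³}`, and the quotient `ℂ[x]/L(ℂ[x])` is 4-dimensional. -/
theorem twisted_deRham_decomposition :
    IsCompl (LinearMap.range Ltw)
      (Submodule.span ℂ ({1, X, X ^ 2, X ^ 3} : Set (Polynomial ℂ))) ∧
    Module.finrank ℂ (Polynomial ℂ ⧸ LinearMap.range Ltw) = 4 := by
  rw [span_eq_degreeLT]
  refine ⟨isCompl_range_Ltw_degreeLT, ?_⟩
  rw [(Submodule.quotientEquivOfIsCompl _ _ isCompl_range_Ltw_degreeLT).finrank_eq,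
    (degreeLTEquiv ℂ 4).finrank_eq, Module.finrank_fin_fun]
end

section
/- Let L : ℂ[x] → ℂ[x] be the linear operator L(p) = p' + 5x⁴·p. For all integers n ≥ 0 and 0 ≤ ν ≤ 4, the polynomial x^{5n+ν} − (−1)ⁿ · ((ν+1)/5)ₙ · x^ν lies in the range of L, where ((ν+1)/5)ₙ = ∏_{j=0}^{n−1} ((ν+1)/5 + j) is the Pochhammer symbol. -/
/-!
Since `L(x^{m+1}) = (m+1) x^m + 5 x^{m+5}` (`Ltw_X_pow_succ`), modulo the range of `L` one has
`x^{m+5} ≡ -((m+1)/5) x^m`. For `m = 5n + ν` the factor is `-((ν+1)/5 + n)`, which is the next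
factor of the signed Pochhammer symbol, so the claim follows by induction on `n`.
-/

open Polynomial

lemma Ltw_X_pow_succ (m : ℕ) :
    Ltw (X ^ (m + 1)) = C ((m : ℂ) + 1) * X ^ m + C (5 : ℂ) * X ^ (m + 5) := by
  have h5 : (C (5 : ℂ)) = 5 := rfl
  simp only [Ltw, LinearMap.add_apply, LinearMap.mulLeft_apply, derivative_X_pow,
    Nat.add_sub_cancel, Nat.cast_add, Nat.cast_one, h5]
  ring

/-- For all `n ≥ 0` and `0 ≤ ν ≤ 4`, the polynomial
`x^{5n+ν} − (−1)ⁿ ((ν+1)/5)ₙ x^ν` lies in the range of `L`, where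
`((ν+1)/5)ₙ = ∏_{j<n} ((ν+1)/5 + j)` is the Pochhammer symbol. -/
theorem pochhammer_reduction (n ν : ℕ) (hν : ν ≤ 4) :
    X ^ (5 * n + ν) -
      C ((-1 : ℂ) ^ n * ∏ j ∈ Finset.range n, (((ν : ℂ) + 1) / 5 + (j : ℂ))) * X ^ ν ∈
      LinearMap.range Ltw := by
  induction n with
  | zero => simp
  | succ n ih =>
    obtain ⟨p, hp⟩ := ih
    refine ⟨(1 / 5 : ℂ) • X ^ (5 * n + ν + 1) - (((ν : ℂ) + 1) / 5 + (n : ℂ)) • p, ?_⟩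
    rw [map_sub, map_smul, map_smul, hp, Ltw_X_pow_succ, Finset.prod_range_succ]
    simp only [smul_eq_C_mul, pow_succ (-1 : ℂ) n, C_mul, C_neg, C_1]
    have h5 : (C (1 / 5 : ℂ)) * C (5 : ℂ) = 1 := by
      rw [← C_mul, ← C_1]; norm_num
    have hc : (C (1 / 5 : ℂ)) * C (((5 * n + ν : ℕ) : ℂ) + 1) =
        C (((ν : ℂ) + 1) / 5 + (n : ℂ)) := by
      rw [← C_mul]; congr 1; push_cast; ring
    have he : 5 * (n + 1) + ν = 5 * n + ν + 5 := by ring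
    rw [he]
    linear_combination X ^ (5 * n + ν + 5) * h5 + X ^ (5 * n + ν) * hc
end

section
/- For i = 1,...,5 let Dᵢ : ℂ[x₁,...,x₅] → ℂ[x₁,...,x₅] be the linear operator Dᵢ(p) = ∂p/∂xᵢ + 5xᵢ⁴·p, and let V = D₁(ℂ[x]) + ⋯ + D₅(ℂ[x]). For all n ∈ ℕ⁵ and ν ∈ {0,1,2,3,4}⁵, the polynomial ∏ᵢ xᵢ^{5nᵢ+νᵢ} − (−1)^{n₁+⋯+n₅} · ∏ᵢ ((νᵢ+1)/5)_{nᵢ} · ∏ᵢ xᵢ^{νᵢ} lies in V; moreover, if some νᵢ = 4 then ∏ᵢ xᵢ^{5nᵢ+νᵢ} itself lies in V. -/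
/-!
If `q` does not involve `xᵢ`, then `Dᵢ(xᵢᵏ q) = k xᵢᵏ⁻¹ q + 5 xᵢᵏ⁺⁴ q`. Modulo `V` this says
`xᵢ⁴ q ≡ 0` for `k = 0` and `xᵢᵃ⁺⁵ q ≡ -((a+1)/5) xᵢᵃ q` for `k = a + 1`. Iterating the second
relation yields the Pochhammer factor of one variable (`X_pow_mul_sub_mem_Vtw`), and treating the
variables one after another, the others being absorbed in `q`, yields the product formula
(`prod_X_pow_mul_sub_mem_Vtw`). If some `νᵢ = 4`, the reduced monomial `∏ xᵢ^νᵢ` is itself in `V`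
by the first relation.
-/

open MvPolynomial

/-- The components `Dᵢ(p) = ∂p/∂xᵢ + 5xᵢ⁴·p` of the twisted differential `D₊ = d + dW₀∧`
for the Fermat quintic `W₀ = x₁⁵+⋯+x₅⁵`. -/
noncomputable def Dtw (i : Fin 5) : MvPolynomial (Fin 5) ℂ →ₗ[ℂ] MvPolynomial (Fin 5) ℂ :=
  (pderiv i).toLinearMap + LinearMap.mulLeft ℂ (5 * X i ^ 4)

/-- The subspace `V = D₁(ℂ[x]) + ⋯ + D₅(ℂ[x])` of twisted-exact polynomials. -/
noncomputable def Vtw : Submodule ℂ (MvPolynomial (Fin 5) ℂ) :=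
  ⨆ i : Fin 5, LinearMap.range (Dtw i)

theorem Dtw_mem_Vtw (i : Fin 5) (p : MvPolynomial (Fin 5) ℂ) : Dtw i p ∈ Vtw :=
  Submodule.mem_iSup_of_mem i ⟨p, rfl⟩

theorem C_mul_mem_Vtw (c : ℂ) {p : MvPolynomial (Fin 5) ℂ} (hp : p ∈ Vtw) : C c * p ∈ Vtw := by
  rw [← smul_eq_C_mul]
  exact Vtw.smul_mem c hp

theorem Dtw_apply (i : Fin 5) (p : MvPolynomial (Fin 5) ℂ) :
    Dtw i p = pderiv i p + 5 * X i ^ 4 * p := rfl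

theorem C_fifth_mul_five : (C (1 / 5 : ℂ) * 5 : MvPolynomial (Fin 5) ℂ) = 1 := by
  have h : (5 : MvPolynomial (Fin 5) ℂ) = C 5 := (map_ofNat C 5).symm
  rw [h, ← C_mul]
  norm_num

theorem X_pow_four_mul_mem_Vtw (i : Fin 5) {q : MvPolynomial (Fin 5) ℂ} (hq : pderiv i q = 0) :
    X i ^ 4 * q ∈ Vtw := by
  have h := C_mul_mem_Vtw (1 / 5) (Dtw_mem_Vtw i q)
  rw [Dtw_apply, hq] at h
  convert h using 1
  linear_combination (-(X i ^ 4 * q)) * C_fifth_mul_five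

/-- The relation `xᵢᵃ⁺⁵ q ≡ -((a+1)/5) xᵢᵃ q` modulo `V`, for `q` not involving `xᵢ`. -/
theorem X_pow_add_five_mul_mem_Vtw (i : Fin 5) (a : ℕ) {q : MvPolynomial (Fin 5) ℂ}
    (hq : pderiv i q = 0) :
    X i ^ (a + 5) * q + C (((a : ℂ) + 1) / 5) * (X i ^ a * q) ∈ Vtw := by
  have h := C_mul_mem_Vtw (1 / 5) (Dtw_mem_Vtw i (X i ^ (a + 1) * q))
  rw [Dtw_apply, pderiv_mul, hq, pderiv_pow, pderiv_X_self] at h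
  have e : (C (((a : ℂ) + 1) / 5) : MvPolynomial (Fin 5) ℂ) =
      C (1 / 5) * ((a + 1 : ℕ) : MvPolynomial (Fin 5) ℂ) := by
    rw [← C_eq_coe_nat, ← C_mul]
    congr 1
    push_cast
    ring
  convert h using 1
  rw [e]
  push_cast
  linear_combination (-(X i ^ (a + 5) * q)) * C_fifth_mul_five

/-- The Pochhammer reduction in a single variable `xᵢ`, for `q` not involving `xᵢ`. -/
theorem X_pow_mul_sub_mem_Vtw (i : Fin 5) (n v : ℕ) {q : MvPolynomial (Fin 5) ℂ}
    (hq : pderiv i q = 0) :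
    X i ^ (5 * n + v) * q -
      C ((-1 : ℂ) ^ n * ∏ j ∈ Finset.range n, (((v : ℂ) + 1) / 5 + (j : ℂ))) * (X i ^ v * q)
      ∈ Vtw := by
  induction n with
  | zero => simp
  | succ n ih =>
    have h1 := X_pow_add_five_mul_mem_Vtw i (5 * n + v) hq
    have h2 := C_mul_mem_Vtw ((((5 * n + v : ℕ) : ℂ) + 1) / 5) ih
    have h := Vtw.sub_mem h1 h2
    have e : (-1 : ℂ) ^ (n + 1) * ∏ j ∈ Finset.range (n + 1), (((v : ℂ) + 1) / 5 + (j : ℂ)) =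
        -((((5 * n + v : ℕ) : ℂ) + 1) / 5) *
          ((-1 : ℂ) ^ n * ∏ j ∈ Finset.range n, (((v : ℂ) + 1) / 5 + (j : ℂ))) := by
      rw [Finset.prod_range_succ]
      push_cast
      ring
    convert h using 1
    rw [e, C_mul, C_neg]
    ring

theorem pderiv_prod_X_pow_eq_zero {i : Fin 5} {s : Finset (Fin 5)} (hi : i ∉ s) (e : Fin 5 → ℕ) :
    pderiv i (∏ k ∈ s, X k ^ e k : MvPolynomial (Fin 5) ℂ) = 0 := by
  induction s using Finset.induction_on with
  | empty => simp
  | insert a s ha ih =>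
    rw [Finset.mem_insert, not_or] at hi
    rw [Finset.prod_insert ha, pderiv_mul, ih hi.2, pderiv_pow, pderiv_X_of_ne (Ne.symm hi.1)]
    simp

/-- The Pochhammer reduction in the variables indexed by `s`, for `r` involving none of them. -/
theorem prod_X_pow_mul_sub_mem_Vtw (n ν : Fin 5 → ℕ) (s : Finset (Fin 5))
    (r : MvPolynomial (Fin 5) ℂ) (hr : ∀ i ∈ s, pderiv i r = 0) :
    (∏ i ∈ s, X i ^ (5 * n i + ν i)) * r -
      C (∏ i ∈ s, ((-1 : ℂ) ^ n i *
        ∏ j ∈ Finset.range (n i), (((ν i : ℂ) + 1) / 5 + (j : ℂ)))) *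
        ((∏ i ∈ s, X i ^ ν i) * r) ∈ Vtw := by
  induction s using Finset.induction_on generalizing r with
  | empty => simp
  | insert a s ha ih =>
    have h1 := ih (X a ^ (5 * n a + ν a) * r) fun i hi => by
      have hia : a ≠ i := fun h => ha (h ▸ hi)
      rw [pderiv_mul, hr i (Finset.mem_insert_of_mem hi), pderiv_pow, pderiv_X_of_ne hia]
      simp
    have hq : pderiv a ((∏ i ∈ s, X i ^ ν i) * r) = 0 := by
      rw [pderiv_mul, hr a (Finset.mem_insert_self a s), pderiv_prod_X_pow_eq_zero ha]
      simp
    have h2 := C_mul_mem_Vtw (∏ i ∈ s, ((-1 : ℂ) ^ n i *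
      ∏ j ∈ Finset.range (n i), (((ν i : ℂ) + 1) / 5 + (j : ℂ))))
      (X_pow_mul_sub_mem_Vtw a (n a) (ν a) hq)
    convert Vtw.add_mem h1 h2 using 1
    simp only [Finset.prod_insert ha, C_mul]
    ring

/-- For all `n ∈ ℕ⁵` and `ν ∈ {0,…,4}⁵`, the polynomial
`∏ᵢ xᵢ^{5nᵢ+νᵢ} − (−1)^{∑nᵢ} ∏ᵢ ((νᵢ+1)/5)_{nᵢ} ∏ᵢ xᵢ^{νᵢ}` lies in `V`;
moreover if some `νᵢ = 4` then `∏ᵢ xᵢ^{5nᵢ+νᵢ}` itself lies in `V`. -/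
theorem multivariable_pochhammer_reduction (n ν : Fin 5 → ℕ) (hν : ∀ i, ν i ≤ 4) :
    ((∏ i, X i ^ (5 * n i + ν i)) -
      C ((-1 : ℂ) ^ (∑ i, n i) *
          ∏ i, ∏ j ∈ Finset.range (n i), (((ν i : ℂ) + 1) / 5 + (j : ℂ))) *
        ∏ i, X i ^ ν i ∈ Vtw) ∧
    ((∃ i, ν i = 4) → (∏ i, X i ^ (5 * n i + ν i)) ∈ Vtw) := by
  have hmain : (∏ i, X i ^ (5 * n i + ν i)) -
      C ((-1 : ℂ) ^ (∑ i, n i) *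
          ∏ i, ∏ j ∈ Finset.range (n i), (((ν i : ℂ) + 1) / 5 + (j : ℂ))) *
        ∏ i, X i ^ ν i ∈ Vtw := by
    have h := prod_X_pow_mul_sub_mem_Vtw n ν Finset.univ 1 (by simp)
    rwa [Finset.prod_mul_distrib, Finset.prod_pow_eq_pow_sum, mul_one, mul_one] at h
  refine ⟨hmain, ?_⟩
  rintro ⟨i, hi⟩
  have hred : (∏ k, X k ^ ν k : MvPolynomial (Fin 5) ℂ) ∈ Vtw := by
    rw [← Finset.mul_prod_erase _ _ (Finset.mem_univ i), hi]
    exact X_pow_four_mul_mem_Vtw i (pderiv_prod_X_pow_eq_zero (Finset.notMem_erase i _) ν)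
  exact (Submodule.sub_mem_iff_left _ (C_mul_mem_Vtw _ hred)).mp hmain
end

section
/- For i = 1,...,5 let Dᵢ : ℂ[x₁,...,x₅] → ℂ[x₁,...,x₅] be the linear operator Dᵢ(p) = ∂p/∂xᵢ + 5xᵢ⁴·p. Then every polynomial in ℂ[x₁,...,x₅] is congruent, modulo the subspace D₁(ℂ[x]) + ⋯ + D₅(ℂ[x]), to a ℂ-linear combination of the 1024 monomials x^ν with ν ∈ {0,1,2,3}⁵; i.e., these monomials span the quotient ℂ[x₁,...,x₅]/(∑ᵢ Dᵢ(ℂ[x])). -/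
/-!
The monomials with all exponents at most `3`, together with `V`, span `ℂ[x]`, by induction on
degree. If `xᵢ⁴` divides `x^s`, write `x^s = x^t xᵢ⁴`; then
`Dᵢ(x^t) = tᵢ x^(t - eᵢ) + 5 x^s`, so modulo `V` the monomial `x^s` is a multiple of
`x^(t - eᵢ)`, which has smaller degree (`monomial_mem_lowSpan_sup`).
-/

open MvPolynomial

/-- The span of the monomials `x^ν` with `ν ∈ {0,1,2,3}⁵`. -/
noncomputable def lowSpan : Submodule ℂ (MvPolynomial (Fin 5) ℂ) :=
  Submodule.span ℂ (Set.range fun ν : Fin 5 → Fin 4 => ∏ i, X i ^ (ν i : ℕ))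

theorem Dtw_monomial (i : Fin 5) (t : Fin 5 →₀ ℕ) :
    Dtw i (monomial t 1) = monomial (t - Finsupp.single i 1) (t i : ℂ)
      + (5 : ℂ) • monomial (t + Finsupp.single i 4) 1 := by
  have h5 : (5 : MvPolynomial (Fin 5) ℂ) = C 5 := (map_ofNat C 5).symm
  simp only [Dtw, LinearMap.add_apply, LinearMap.mulLeft_apply, Derivation.coeFn_coe,
    pderiv_monomial, one_mul]
  rw [h5, X_pow_eq_monomial, mul_assoc, monomial_mul, C_mul', add_comm t, one_mul]

/-- The reduction step: by `Dtw_monomial`, a monomial divisible by `xᵢ⁴` is congruent modulo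
`Vtw` to a multiple of a monomial of strictly smaller degree. -/
theorem monomial_mem_lowSpan_sup (s : Fin 5 →₀ ℕ) (a : ℂ) :
    monomial s a ∈ lowSpan ⊔ Vtw := by
  induction hn : s.degree using Nat.strong_induction_on generalizing s a with
  | _ n ih =>
    have key : (monomial s 1 : MvPolynomial (Fin 5) ℂ) ∈ lowSpan ⊔ Vtw := by
      by_cases hs : ∀ i, s i < 4
      · refine Submodule.mem_sup_left (Submodule.subset_span ⟨fun i => ⟨s i, hs i⟩, ?_⟩)
        rw [monomial_eq, C_1, one_mul, Finsupp.prod_fintype _ _ (by simp)]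
      · push Not at hs
        obtain ⟨i, hi⟩ := hs
        obtain ⟨t, rfl⟩ : ∃ t, s = t + Finsupp.single i 4 :=
          ⟨s - Finsupp.single i 4, (tsub_add_cancel_of_le (by simpa using hi)).symm⟩
        have hdeg : (t - Finsupp.single i 1).degree < n := by
          have h1 : (t - Finsupp.single i 1).degree ≤ t.degree :=
            Finsupp.degree_mono tsub_le_self
          rw [map_add, Finsupp.degree_single] at hn
          omega
        have hlow := ih _ hdeg (t - Finsupp.single i 1) (t i : ℂ) rfl
        have hD : Dtw i (monomial t 1) ∈ lowSpan ⊔ Vtw :=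
          Submodule.mem_sup_right (Dtw_mem_Vtw i _)
        rw [Dtw_monomial, Submodule.add_mem_iff_right _ hlow] at hD
        exact (Submodule.smul_mem_iff _ (by norm_num)).1 hD
    simpa [smul_monomial] using Submodule.smul_mem _ a key

/-- Every polynomial in `ℂ[x₁,…,x₅]` is congruent, modulo `V = ∑ᵢ Dᵢ(ℂ[x])`, to a
`ℂ`-linear combination of the `1024` monomials `x^ν`, `ν ∈ {0,1,2,3}⁵`; i.e. these
monomials span the quotient `ℂ[x₁,…,x₅]/V`. -/
theorem monomials_span_twisted_cohomology (p : MvPolynomial (Fin 5) ℂ) :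
    ∃ c : (Fin 5 → Fin 4) → ℂ,
      p - ∑ ν : Fin 5 → Fin 4, C (c ν) * ∏ i, X i ^ (ν i : ℕ) ∈ Vtw := by
  have hp : p ∈ lowSpan ⊔ Vtw := by
    rw [p.as_sum]
    exact Submodule.sum_mem _ fun s _ => monomial_mem_lowSpan_sup s _
  obtain ⟨q, hq, v, hv, rfl⟩ := Submodule.mem_sup.1 hp
  obtain ⟨c, rfl⟩ := (Submodule.mem_span_range_iff_exists_fun ℂ).1 hq
  refine ⟨c, ?_⟩
  simpa only [C_mul', add_sub_cancel_left] using hv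
end

section
/- Let a, b ∈ ℝ with sin(π(a+b)) ≠ 0, and define B ∈ M₂(ℂ) by B = (1/(i·sin(π(a+b)))) · [[cos(π(a−b)) − e^{iπ(a+b)}, 2 sin(πa) sin(πb)], [2 e^{2πi(a+b)} sin(πa) sin(πb), e^{iπ(a+b)}(e^{2πia} + e^{2πib} − 2)/2]]. Then B preserves the signature-(1,1) Hermitian form: Bᴴ · diag(1, −1) · B = diag(1, −1), where Bᴴ is the conjugate transpose. -/
/-!
Put `k = 2 sin(πa) sin(πb)`, `s = sin(π(a+b))` and `u = exp(iπ(a+b))`. Since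
`cos(π(a-b)) = cos(π(a+b)) + k` and `(e^{2πia} + e^{2πib}) / 2 = u cos(π(a-b))`,
the matrix factors as `B = (is)⁻¹ • [[k - is, k], [u²k, u²(k + is)]]` (`Bmon_eq`).
As `k` and `s` are real and `|u| = 1`, its two columns have squared norms
`±((k² + s²) - k²) / s² = ±1` for the form `diag(1, -1)`, and they are orthogonal for it.
-/


open Complex Real Matrix

/-- The monodromy matrix `B` around `z = ∞` acting on the hypergeometric solutions
`F₁, F₂`. -/
noncomputable def Bmon (a b : ℝ) : Matrix (Fin 2) (Fin 2) ℂ :=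
  (1 / (Complex.I * (Real.sin (π * (a + b)) : ℂ))) •
    !![(Real.cos (π * (a - b)) : ℂ) - Complex.exp (Complex.I * π * (a + b)),
        2 * (Real.sin (π * a) : ℂ) * (Real.sin (π * b) : ℂ);
      2 * Complex.exp (2 * π * Complex.I * (a + b)) *
          (Real.sin (π * a) : ℂ) * (Real.sin (π * b) : ℂ),
        Complex.exp (π * Complex.I * (a + b)) *
          (Complex.exp (2 * π * Complex.I * a) + Complex.exp (2 * π * Complex.I * b) - 2) / 2]

/-- The real-parameter form of `Bmon`: up to the unimodular factor `u²` on the second row,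
a matrix of `SU(1,1)` shape scaled by `(is)⁻¹`. -/
lemma Bmon_eq (a b : ℝ) :
    Bmon a b = (1 / (Complex.I * (Real.sin (π * (a + b)) : ℂ))) •
      !![((2 * Real.sin (π * a) * Real.sin (π * b) : ℝ) : ℂ)
            - Complex.I * (Real.sin (π * (a + b)) : ℂ),
          ((2 * Real.sin (π * a) * Real.sin (π * b) : ℝ) : ℂ);
        Complex.exp ((π * (a + b) : ℝ) * Complex.I) ^ 2 *
          ((2 * Real.sin (π * a) * Real.sin (π * b) : ℝ) : ℂ),
        Complex.exp ((π * (a + b) : ℝ) * Complex.I) ^ 2 *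
          (((2 * Real.sin (π * a) * Real.sin (π * b) : ℝ) : ℂ)
            + Complex.I * (Real.sin (π * (a + b)) : ℂ))] := by
  have e1 : Complex.exp (Complex.I * π * (a + b)) =
      Complex.exp (π * a * Complex.I) * Complex.exp (π * b * Complex.I) := by
    rw [← Complex.exp_add]; ring_nf
  have e2 : Complex.exp (π * Complex.I * (a + b)) =
      Complex.exp (π * a * Complex.I) * Complex.exp (π * b * Complex.I) := by
    rw [← Complex.exp_add]; ring_nf
  have e3 : Complex.exp (2 * π * Complex.I * (a + b)) =
      (Complex.exp (π * a * Complex.I) * Complex.exp (π * b * Complex.I)) ^ 2 := by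
    rw [← Complex.exp_add, ← Complex.exp_nat_mul]; push_cast; ring_nf
  have e4 : Complex.exp (2 * π * Complex.I * a) = Complex.exp (π * a * Complex.I) ^ 2 := by
    rw [← Complex.exp_nat_mul]; push_cast; ring_nf
  have e5 : Complex.exp (2 * π * Complex.I * b) = Complex.exp (π * b * Complex.I) ^ 2 := by
    rw [← Complex.exp_nat_mul]; push_cast; ring_nf
  have e6 : Complex.exp ((π * (a + b) : ℝ) * Complex.I) =
      Complex.exp (π * a * Complex.I) * Complex.exp (π * b * Complex.I) := by
    rw [← Complex.exp_add]; push_cast; ring_nf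
  have hI : Complex.I ^ 2 = -1 := Complex.I_sq
  have ha := Complex.sin_sq_add_cos_sq (π * a)
  have hb := Complex.sin_sq_add_cos_sq (π * b)
  unfold Bmon
  rw [e1, e2, e3, e4, e5, e6]
  congr 1
  -- Every entry becomes a polynomial identity in `sin`, `cos` of `πa`, `πb` and `I`.
  simp only [mul_add, mul_sub, Real.sin_add, Real.cos_sub, Complex.exp_mul_I]
  push_cast
  generalize Complex.sin (π * a) = sa at *
  generalize Complex.cos (π * a) = ca at *
  generalize Complex.sin (π * b) = sb at *
  generalize Complex.cos (π * b) = cb at *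
  generalize Complex.I = j at *
  ext m n
  fin_cases m <;> fin_cases n <;> simp
  · grind
  · grind
  · grind

/-- The hypergeometric monodromy matrix `B` preserves the signature-`(1,1)` Hermitian
form: `Bᴴ · diag(1,−1) · B = diag(1,−1)`. -/
theorem monodromy_preserves_signature_form (a b : ℝ) (h : Real.sin (π * (a + b)) ≠ 0) :
    (Bmon a b)ᴴ * !![(1 : ℂ), 0; 0, -1] * Bmon a b = !![(1 : ℂ), 0; 0, -1] := by
  have hu : (starRingEnd ℂ) (Complex.exp ((π * (a + b) : ℝ) * Complex.I)) *
      Complex.exp ((π * (a + b) : ℝ) * Complex.I) = 1 := by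
    rw [← Complex.exp_conj, ← Complex.exp_add]
    simp
  have hs : (Real.sin (π * (a + b)) : ℂ) ≠ 0 := by exact_mod_cast h
  have hI : Complex.I ^ 2 = -1 := Complex.I_sq
  rw [Bmon_eq]
  generalize 2 * Real.sin (π * a) * Real.sin (π * b) = k
  generalize Complex.exp ((π * (a + b) : ℝ) * Complex.I) = u at *
  generalize Real.sin (π * (a + b)) = s at *
  have hI0 := Complex.I_ne_zero
  ext m n
  fin_cases m <;> fin_cases n <;>
    simp [Matrix.mul_apply, Fin.sum_univ_two, -Complex.inv_I] <;>
    generalize (starRingEnd ℂ) u = v at * <;>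
    generalize Complex.I = j at * <;>
    field_simp <;> grind
end
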